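/- arXiv:2303.04021 — 2 statements merged into one kernel-verified Lean document; each statement's English description precedes it below -/
import Mathlib

section
/- Let G ∈ F_q^{3×n} be a systematic MDS matrix with n ≥ 6. Then the 3-dimensional Lebesgue measure of the service rate region Λ(G) ⊆ ℝ³ equals (n³ + 18n² + 54n − 18)/162. -/
open Matrix

/-- The ν-th column of a matrix. -/
def matCol {F : Type} [Field F] {k n : ℕ} (G : Matrix (Fin k) (Fin n) F) (ν : Fin n) :
    Fin k → F :=
  fun r => G r ν

/-- `R ⊆ {1,...,n}` is a recovery set for object `i` if `e_i` lies in the span of the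
columns of `G` indexed by `R`. -/
def IsRecoverySet {F : Type} [Field F] {k n : ℕ} (G : Matrix (Fin k) (Fin n) F)
    (i : Fin k) (R : Finset (Fin n)) : Prop :=
  Pi.single i (1 : F) ∈ Submodule.span F (matCol G '' (R : Set (Fin n)))

/-- The service rate region `Λ(G)` of the system given by all recovery sets of `G`,
with server capacity `1`: the allocation `x i R` is required to vanish on non-recovery
sets, so all sums effectively range over the recovery sets of each object. -/
def SRRG {F : Type} [Field F] {k n : ℕ} (G : Matrix (Fin k) (Fin n) F) :
    Set (Fin k → ℝ) :=
  {lam | ∃ x : Fin k → Finset (Fin n) → ℝ,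
    (∀ i R, 0 ≤ x i R) ∧
    (∀ i R, ¬ IsRecoverySet G i R → x i R = 0) ∧
    (∀ i, ∑ R : Finset (Fin n), x i R = lam i) ∧
    (∀ ν : Fin n, ∑ i, ∑ R : Finset (Fin n), (if ν ∈ R then x i R else 0) ≤ 1)}

section Aux

/-- Hypersimplex decomposition through Birkhoff's theorem. -/
lemma hypersimplex {n : ℕ} (hn : 4 ≤ n) (u : Fin n → ℝ) (h0 : ∀ ν, 0 ≤ u ν) (h1 : ∀ ν, u ν ≤ 1)
    (hs : ∑ ν, u ν = 3) :
    ∃ y : Finset (Fin n) → ℝ, (∀ R, 0 ≤ y R) ∧ (∀ R, R.card ≠ 3 → y R = 0) ∧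
      ∑ R, y R = 1 ∧ ∀ ν, ∑ R, (if ν ∈ R then y R else 0) = u ν := by
  classical
  set T : Finset (Fin n) := Finset.univ.filter (fun j => j.1 < 3) with hT
  have hTc : T.card = 3 := by
    have : T = Finset.univ.map (Fin.castLEEmb (by omega : 3 ≤ n)) := by
      ext j
      simp only [hT, Finset.mem_filter, Finset.mem_univ, true_and, Finset.mem_map]
      constructor
      · intro h; exact ⟨⟨j.1, h⟩, by ext; simp⟩
      · rintro ⟨a, rfl⟩; simp
    rw [this]; simp
  have hTc' : (Finset.univ.filter (fun j => j ∉ T)).card = n - 3 := by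
    have : Finset.univ.filter (fun j => j ∉ T) = Tᶜ := by ext; simp
    rw [this, Finset.card_compl, hTc]; simp
  have hpos : (0:ℝ) < (n:ℝ) - 3 := by
    have : (4:ℝ) ≤ n := by exact_mod_cast hn
    linarith
  have hcast : ((n - 3 : ℕ) : ℝ) = (n:ℝ) - 3 := by
    rw [Nat.cast_sub (by omega)]; norm_num
  let M : Matrix (Fin n) (Fin n) ℝ := fun ν j => if j ∈ T then u ν / 3 else (1 - u ν) / (n - 3)
  have hM : M ∈ doublyStochastic ℝ (Fin n) := by
    rw [mem_doublyStochastic_iff_sum]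
    refine ⟨fun i j => ?_, fun i => ?_, fun j => ?_⟩
    · simp only [M]
      split_ifs
      · have := h0 i; positivity
      · exact div_nonneg (by linarith [h1 i]) hpos.le
    · simp only [M]
      rw [Finset.sum_ite, Finset.sum_const, Finset.sum_const, hTc', Finset.filter_univ_mem, hTc,
        nsmul_eq_mul, nsmul_eq_mul, hcast]
      field_simp
      push_cast; ring
    · simp only [M]
      split_ifs
      · rw [← Finset.sum_div, hs]; norm_num
      · rw [← Finset.sum_div, Finset.sum_sub_distrib, hs]
        simp only [Finset.sum_const, Finset.card_univ, Fintype.card_fin, nsmul_eq_mul, mul_one]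
        exact div_self hpos.ne'
  obtain ⟨w, hw0, hw1, hw⟩ := exists_eq_sum_perm_of_mem_doublyStochastic hM
  let S : Equiv.Perm (Fin n) → Finset (Fin n) := fun σ => Finset.univ.filter (fun ν => σ ν ∈ T)
  have hS : ∀ σ, (S σ).card = 3 := by
    intro σ
    have : S σ = T.map σ.symm.toEmbedding := by
      ext ν; simp [S]
    rw [this, Finset.card_map, hTc]
  refine ⟨fun R => ∑ σ, if S σ = R then w σ else 0, fun R => ?_, fun R hR => ?_, ?_, fun ν => ?_⟩
  · exact Finset.sum_nonneg fun σ _ => by split_ifs <;> simp [hw0]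
  · refine Finset.sum_eq_zero fun σ _ => ?_
    rw [if_neg]; rintro rfl; exact hR (hS σ)
  · rw [Finset.sum_comm]; simpa using hw1
  · have h3 : ∑ j ∈ T, M ν j = u ν := by
      rw [Finset.sum_congr rfl (g := fun _ => u ν / 3) (fun j hj => by simp only [M, if_pos hj])]
      rw [Finset.sum_const, hTc]; simp; ring
    rw [← h3, ← hw]
    have h4 : ∀ R : Finset (Fin n), (if ν ∈ R then ∑ σ, (if S σ = R then w σ else 0) else 0)
        = ∑ σ, if S σ = R then (if ν ∈ S σ then w σ else 0) else 0 := by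
      intro R
      split_ifs with h
      · refine Finset.sum_congr rfl fun σ _ => ?_
        split_ifs with h1 h2 <;> simp_all
      · symm
        refine Finset.sum_eq_zero fun σ _ => ?_
        split_ifs with h1 h2 <;> simp_all
    simp only [h4]
    rw [Finset.sum_comm]
    simp only [Matrix.sum_apply, Matrix.smul_apply, smul_eq_mul]
    rw [Finset.sum_comm (s := T)]
    refine Finset.sum_congr rfl fun σ _ => ?_
    simp [S, Equiv.Perm.permMatrix, PEquiv.toMatrix_apply, eq_comm]

lemma recovery_of_card {F : Type} [Field F] {n : ℕ} (G : Matrix (Fin 3) (Fin n) F)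
    (hmds : ∀ S : Finset (Fin n), S.card = 3 →
      LinearIndependent F (fun ν : {x : Fin n // x ∈ S} => matCol G ν.1))
    (i : Fin 3) (R : Finset (Fin n)) (hR : R.card = 3) : IsRecoverySet G i R := by
  have h := (hmds R hR).span_eq_top_of_card_eq_finrank' (by simp [hR])
  unfold IsRecoverySet
  have e : matCol G '' (R : Set (Fin n)) = Set.range (fun ν : {x : Fin n // x ∈ R} => matCol G ν.1) := by
    ext v; simp
  rw [e, h]; trivial

lemma card_of_recovery {F : Type} [Field F] {n : ℕ} (hn : 6 ≤ n) (h3 : 3 ≤ n) (G : Matrix (Fin 3) (Fin n) F)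
    (hsys : ∀ j : Fin 3, matCol G (Fin.castLE h3 j) = Pi.single j 1)
    (hmds : ∀ S : Finset (Fin n), S.card = 3 →
      LinearIndependent F (fun ν : {x : Fin n // x ∈ S} => matCol G ν.1))
    (i : Fin 3) (R : Finset (Fin n)) (hR : IsRecoverySet G i R)
    (hi : Fin.castLE h3 i ∉ R) : 3 ≤ R.card := by
  by_contra hlt
  push Not at hlt
  set a : Fin n := Fin.castLE h3 i with ha
  have hc : (insert a R).card ≤ 3 := by rw [Finset.card_insert_of_notMem hi]; omega
  obtain ⟨S, hS1, hS2⟩ := Finset.exists_superset_card_eq hc (by simp; omega)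
  have hli := hmds S hS2
  have haS : a ∈ S := hS1 (Finset.mem_insert_self _ _)
  have := (linearIndependent_iff_notMem_span.mp hli) ⟨a, haS⟩
  apply this
  have h2 := hR
  unfold IsRecoverySet at h2
  rw [← hsys i] at h2
  refine Submodule.span_mono ?_ h2
  rintro _ ⟨ν, hν, rfl⟩
  refine ⟨⟨ν, hS1 (Finset.mem_insert_of_mem hν)⟩, ⟨trivial, ?_⟩, rfl⟩
  rintro h
  simp only [Set.mem_singleton_iff, Subtype.mk.injEq] at h
  exact hi (h ▸ hν)

open MeasureTheory

/-- The cost function. -/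
noncomputable def cst (t : ℝ) : ℝ := max t (3 * t - 2)

/-- truncated powers -/
noncomputable def tp (k : ℕ) (t : ℝ) : ℝ := (max t 0) ^ k

lemma continuous_cst : Continuous cst := by unfold cst; fun_prop
lemma continuous_tp (k : ℕ) : Continuous (tp k) := by unfold tp; fun_prop
lemma tp_of_nonpos {k : ℕ} (hk : k ≠ 0) {t : ℝ} (h : t ≤ 0) : tp k t = 0 := by
  unfold tp; rw [max_eq_right h, zero_pow hk]

lemma hasDerivAt_tp (k : ℕ) (hk : 1 ≤ k) (t : ℝ) :
    HasDerivAt (tp (k+1)) ((k + 1 : ℝ) * tp k t) t := by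
  rcases lt_trichotomy t 0 with h | h | h
  · rw [tp_of_nonpos (by omega) h.le, mul_zero]
    refine (hasDerivAt_const t (0:ℝ)).congr_of_eventuallyEq ?_
    filter_upwards [eventually_lt_nhds h] with y hy
    exact tp_of_nonpos (by omega) hy.le
  · subst h
    rw [tp_of_nonpos (by omega) le_rfl, mul_zero]
    rw [hasDerivAt_iff_isLittleO_nhds_zero]
    simp only [zero_add, smul_zero, sub_zero, tp_of_nonpos (Nat.succ_ne_zero k) (le_refl (0:ℝ))]
    have h1 : (fun h : ℝ => tp (k+1) h) =O[nhds 0] fun h : ℝ => h ^ (k+1) := by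
      refine Asymptotics.IsBigO.of_bound 1 (Filter.Eventually.of_forall fun x => ?_)
      unfold tp
      rw [norm_pow, norm_pow, one_mul]
      gcongr
      rw [Real.norm_eq_abs, Real.norm_eq_abs]
      rcases le_total x 0 with h | h <;> simp [h]
    refine h1.trans_isLittleO ?_
    have := Asymptotics.isLittleO_pow_pow (𝕜 := ℝ) (show 1 < k+1 by omega)
    simpa using this
  · have h2 := (hasDerivAt_pow (k+1) t)
    have : tp k t = t ^ k := by unfold tp; rw [max_eq_left h.le]
    rw [this]
    refine (h2.congr_of_eventuallyEq ?_).congr_deriv (by push_cast; simp)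
    filter_upwards [eventually_gt_nhds h] with y hy
    unfold tp; rw [max_eq_left hy.le]

lemma integral_tp (k : ℕ) (hk : 1 ≤ k) (a b : ℝ) :
    ∫ t in a..b, tp k t = (tp (k+1) b - tp (k+1) a) / (k+1) := by
  have h : ∀ x ∈ Set.uIcc a b, HasDerivAt (fun t => tp (k+1) t / (k+1 : ℝ)) (tp k x) x := by
    intro x _
    refine ((hasDerivAt_tp k hk x).div_const (k+1 : ℝ)).congr_deriv ?_
    field_simp
  rw [intervalIntegral.integral_eq_sub_of_hasDerivAt h ((continuous_tp k).intervalIntegrable _ _)]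
  ring

lemma integral_tp_cst (k : ℕ) (hk : 1 ≤ k) (s M : ℝ) (hM : 1 ≤ M) (hs : s ≤ M) :
    ∫ y in (0:ℝ)..M, tp k (s - cst y)
      = (tp (k+1) s - 2/3 * tp (k+1) (s-1)) / (k+1) := by
  have hc : Continuous fun y => tp k (s - cst y) :=
    (continuous_tp k).comp (continuous_const.sub continuous_cst)
  rw [← intervalIntegral.integral_add_adjacent_intervals (b := 1)
    (hc.intervalIntegrable _ _) (hc.intervalIntegrable _ _)]
  have h1 : ∫ y in (0:ℝ)..1, tp k (s - cst y) = ∫ y in (0:ℝ)..1, tp k (s - y) := by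
    refine intervalIntegral.integral_congr fun y hy => ?_
    rw [Set.uIcc_of_le zero_le_one] at hy
    have : cst y = y := max_eq_left (by linarith [hy.2])
    simp only [this]
  have h2 : ∫ y in (1:ℝ)..M, tp k (s - cst y) = ∫ y in (1:ℝ)..M, tp k ((s + 2) - 3 * y) := by
    refine intervalIntegral.integral_congr fun y hy => ?_
    rw [Set.uIcc_of_le hM] at hy
    have : cst y = 3 * y - 2 := max_eq_right (by linarith [hy.1])
    simp only [this]
    congr 1; ring
  rw [h1, h2, intervalIntegral.integral_comp_sub_left (fun y => tp k y),
    intervalIntegral.integral_comp_sub_mul (fun y => tp k y) (by norm_num : (3:ℝ) ≠ 0),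
    integral_tp k hk, integral_tp k hk, tp_of_nonpos (Nat.succ_ne_zero k) (by linarith : s + 2 - 3 * M ≤ 0)]
  have : s + 2 - 3 * 1 = s - 1 := by ring
  rw [this, smul_eq_mul, sub_zero]
  field_simp
  ring

/-- The region -/
def reg (k : ℕ) (s : ℝ) : Set (Fin k → ℝ) := {l | (∀ i, 0 ≤ l i) ∧ ∑ i, cst (l i) ≤ s}

lemma measurableSet_reg (k : ℕ) (s : ℝ) : MeasurableSet (reg k s) := by
  refine (IsClosed.inter (s₁ := {l : Fin k → ℝ | ∀ i, 0 ≤ l i}) (s₂ := {l | ∑ i, cst (l i) ≤ s}) ?_ ?_).measurableSet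
  · simp only [Set.ofPred_forall]
    exact isClosed_iInter fun i => isClosed_le continuous_const (continuous_apply i)
  · exact isClosed_le (continuous_finsetSum _ fun i _ => continuous_cst.comp (continuous_apply i)) continuous_const

lemma volume_reg_succ (k : ℕ) (s : ℝ) :
    volume (reg (k+1) s) = ∫⁻ y in Set.Ici (0:ℝ), volume (reg k (s - cst y)) := by
  have hp := (volume_preserving_piFinSuccAbove (fun _ : Fin (k+1) => ℝ) 0)
  have hm : MeasurableSet ((MeasurableEquiv.piFinSuccAbove (fun _ : Fin (k+1) => ℝ) 0).symm ⁻¹' reg (k+1) s) :=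
    (MeasurableEquiv.measurable _) (measurableSet_reg _ _)
  rw [← hp.symm.measure_preimage (measurableSet_reg _ _).nullMeasurableSet, Measure.volume_eq_prod,
    Measure.prod_apply hm, ← lintegral_indicator measurableSet_Ici]
  congr 1
  ext y
  by_cases hy : 0 ≤ y
  · rw [Set.indicator_of_mem (by exact hy)]
    congr 1
    ext l
    simp [reg, Fin.forall_fin_succ, Fin.sum_univ_succ, hy, MeasurableEquiv.piFinSuccAbove, Fin.insertNthEquiv]
    intro _
    constructor <;> intro h <;> linarith
  · rw [Set.indicator_of_notMem (by exact hy)]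
    convert measure_empty (μ := (volume : Measure (Fin k → ℝ)))
    ext l
    simp [reg, Fin.forall_fin_succ, Fin.sum_univ_succ, hy, MeasurableEquiv.piFinSuccAbove, Fin.insertNthEquiv]

lemma volume_reg_zero (s : ℝ) : volume (reg 0 s) = if 0 ≤ s then 1 else 0 := by
  split_ifs with h
  · have : reg 0 s = Set.univ := by ext; simp [reg, h]
    rw [this, volume_pi, Measure.pi_of_empty _ Fin.elim0]; simp
  · have : reg 0 s = ∅ := by ext; simp [reg]; linarith
    rw [this]; simp

lemma volume_reg_one (s : ℝ) : volume (reg 1 s) = ENNReal.ofReal (tp 1 s - 2/3 * tp 1 (s-1)) := by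
  rw [volume_reg_succ]
  simp only [volume_reg_zero]
  have h : (fun y => if 0 ≤ s - cst y then (1 : ENNReal) else 0)
      = Set.indicator (Set.Iic (min s ((s+2)/3))) 1 := by
    ext y
    simp only [Set.indicator, cst, Set.mem_Iic, le_min_iff, sub_nonneg, max_le_iff, Pi.one_apply]
    refine if_congr ?_ rfl rfl
    constructor <;> rintro ⟨h1, h2⟩ <;> constructor <;> linarith
  rw [h, lintegral_indicator_one measurableSet_Iic, Measure.restrict_apply measurableSet_Iic,
    Set.inter_comm, Set.Ici_inter_Iic, Real.volume_Icc, sub_zero]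
  unfold tp
  simp only [pow_one]
  rcases le_total s 0 with h0 | h0
  · rw [ENNReal.ofReal_of_nonpos (by simp [h0]), max_eq_right h0, max_eq_right (by linarith)]
    simp
  · congr 1
    rw [max_eq_left h0]
    rcases le_total s 1 with h1 | h1
    · rw [max_eq_right (by linarith), min_eq_left (by linarith)]; ring
    · rw [max_eq_left (by linarith), min_eq_right (by linarith)]; ring

/-- truncation step -/
lemma lint_step (f : ℝ → ℝ) (hf : Continuous f) (h0 : ∀ t, 0 ≤ f t) (hn : ∀ t ≤ 0, f t = 0)
    (s M : ℝ) (hM : 1 ≤ M) (hs : s ≤ M) :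
    ∫⁻ y in Set.Ici (0:ℝ), ENNReal.ofReal (f (s - cst y)) =
      ENNReal.ofReal (∫ y in (0:ℝ)..M, f (s - cst y)) := by
  have hc : Continuous fun y => f (s - cst y) := hf.comp (continuous_const.sub continuous_cst)
  rw [intervalIntegral.integral_of_le (by linarith), ← integral_Icc_eq_integral_Ioc,
    ofReal_integral_eq_lintegral_ofReal (hc.integrableOn_Icc)
      (Filter.Eventually.of_forall fun y => h0 _),
    ← lintegral_indicator measurableSet_Ici, ← lintegral_indicator measurableSet_Icc]
  congr 1
  ext y
  simp only [Set.indicator, Set.mem_Ici, Set.mem_Icc]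
  by_cases h1 : 0 ≤ y
  · by_cases h2 : y ≤ M
    · simp [h1, h2]
    · have : y ≤ cst y := le_max_left _ _
      simp [h1, h2, hn (s - cst y) (by push Not at h2; linarith)]
  · simp [h1]

lemma tp1_mono_aux (s : ℝ) : 0 ≤ tp 1 s - 2/3 * tp 1 (s-1) := by
  unfold tp
  rcases le_total s 0 with h0 | h0
  · rw [max_eq_right h0, max_eq_right (by linarith)]; simp
  · rw [max_eq_left h0]
    rcases le_total s 1 with h1 | h1
    · rw [max_eq_right (by linarith)]; simp [h0]
    · rw [max_eq_left (by linarith)]; linarith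

lemma volume_reg_two (s : ℝ) : volume (reg 2 s) =
    ENNReal.ofReal (1/2 * tp 2 s - 2/3 * tp 2 (s-1) + 2/9 * tp 2 (s-2)) := by
  rw [volume_reg_succ]
  simp only [volume_reg_one]
  have hM : 1 ≤ max 1 s := le_max_left _ _
  have hs : s ≤ max 1 s := le_max_right _ _
  have hc1 := (continuous_tp 1)
  have hcc := continuous_cst
  rw [lint_step (fun t => tp 1 t - 2/3 * tp 1 (t - 1)) (by fun_prop) tp1_mono_aux
    (fun t ht => by rw [tp_of_nonpos one_ne_zero ht, tp_of_nonpos one_ne_zero (by linarith)]; simp)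
    s (max 1 s) hM hs]
  have e : ∀ y, s - cst y - 1 = (s - 1) - cst y := fun y => by ring
  simp only [e]
  rw [intervalIntegral.integral_sub (by apply Continuous.intervalIntegrable; fun_prop)
    (by apply Continuous.intervalIntegrable; fun_prop), intervalIntegral.integral_const_mul,
    integral_tp_cst 1 le_rfl s _ hM hs, integral_tp_cst 1 le_rfl (s-1) _ hM (by linarith)]
  congr 1
  have : s - 1 - 1 = s - 2 := by ring
  rw [this]; push_cast; ring

lemma tp2_aux (s : ℝ) : 0 ≤ 1/2 * tp 2 s - 2/3 * tp 2 (s-1) + 2/9 * tp 2 (s-2) := by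
  have hM : 1 ≤ max 1 s := le_max_left _ _
  have hs : s ≤ max 1 s := le_max_right _ _
  have hc1 := (continuous_tp 1)
  have hcc := continuous_cst
  have key : 0 ≤ ∫ y in (0:ℝ)..max 1 s, (tp 1 (s - cst y) - 2/3 * tp 1 (s - cst y - 1)) :=
    intervalIntegral.integral_nonneg (by linarith) fun y _ => tp1_mono_aux _
  have e : ∀ y, s - cst y - 1 = (s - 1) - cst y := fun y => by ring
  simp only [e] at key
  rw [intervalIntegral.integral_sub (by apply Continuous.intervalIntegrable; fun_prop)
    (by apply Continuous.intervalIntegrable; fun_prop), intervalIntegral.integral_const_mul,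
    integral_tp_cst 1 le_rfl s _ hM hs, integral_tp_cst 1 le_rfl (s-1) _ hM (by linarith)] at key
  have : s - 1 - 1 = s - 2 := by ring
  rw [this] at key; push_cast at key; linarith

lemma volume_reg_three (s : ℝ) (hs3 : 3 ≤ s) : volume (reg 3 s) =
    ENNReal.ofReal ((s^3 + 18 * s^2 + 54 * s - 18)/162) := by
  rw [volume_reg_succ]
  simp only [volume_reg_two]
  have hM : 1 ≤ s := by linarith
  have hc1 := (continuous_tp 2)
  have hcc := continuous_cst
  rw [lint_step (fun t => 1/2 * tp 2 t - 2/3 * tp 2 (t-1) + 2/9 * tp 2 (t-2)) (by fun_prop) tp2_aux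
    (fun t ht => by
      rw [tp_of_nonpos two_ne_zero ht, tp_of_nonpos two_ne_zero (by linarith),
        tp_of_nonpos two_ne_zero (by linarith)]; simp)
    s s hM le_rfl]
  have e : ∀ y, s - cst y - 1 = (s - 1) - cst y := fun y => by ring
  have e2 : ∀ y, s - cst y - 2 = (s - 2) - cst y := fun y => by ring
  simp only [e, e2]
  rw [intervalIntegral.integral_add (by apply Continuous.intervalIntegrable; fun_prop)
    (by apply Continuous.intervalIntegrable; fun_prop),
    intervalIntegral.integral_sub (by apply Continuous.intervalIntegrable; fun_prop)
    (by apply Continuous.intervalIntegrable; fun_prop), intervalIntegral.integral_const_mul,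
    intervalIntegral.integral_const_mul, intervalIntegral.integral_const_mul,
    integral_tp_cst 2 one_le_two s _ hM le_rfl, integral_tp_cst 2 one_le_two (s-1) _ hM (by linarith),
    integral_tp_cst 2 one_le_two (s-2) _ hM (by linarith)]
  congr 1
  have ht : ∀ t : ℝ, 0 ≤ t → tp 3 t = t ^ 3 := fun t h => by unfold tp; rw [max_eq_left h]
  rw [show 2 + 1 = 3 from rfl, ht s (by linarith), ht (s-1) (by linarith),
    ht (s-1-1) (by linarith), ht (s-2) (by linarith), ht (s-2-1) (by linarith)]
  push_cast; ring

lemma SRRG_eq {F : Type} [Field F] {n : ℕ} (hn : 6 ≤ n) (h3 : 3 ≤ n)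
    (G : Matrix (Fin 3) (Fin n) F)
    (hsys : ∀ j : Fin 3, matCol G (Fin.castLE h3 j) = Pi.single j 1)
    (hmds : ∀ S : Finset (Fin n), S.card = 3 →
      LinearIndependent F (fun ν : {x : Fin n // x ∈ S} => matCol G ν.1)) :
    SRRG G = reg 3 n := by
  classical
  have hn' : (6:ℝ) ≤ n := by exact_mod_cast hn
  let ι : Fin 3 → Fin n := fun i => Fin.castLE h3 i
  have hι : Function.Injective ι := Fin.castLE_injective _
  ext lam
  constructor
  · rintro ⟨x, hx0, hxr, hxs, hxc⟩
    refine ⟨fun i => hxs i ▸ Finset.sum_nonneg fun R _ => hx0 i R, ?_⟩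
    have htot : ∑ i, ∑ R : Finset (Fin n), (R.card : ℝ) * x i R ≤ n := by
      have h1 := Finset.sum_le_sum (s := Finset.univ) (fun (ν : Fin n) _ => hxc ν)
      simp only [Finset.sum_const, Finset.card_univ, Fintype.card_fin, nsmul_eq_mul, mul_one] at h1
      refine le_trans (le_of_eq ?_) h1
      rw [Finset.sum_comm (s := (Finset.univ : Finset (Fin n)))]
      refine Finset.sum_congr rfl fun i _ => ?_
      rw [Finset.sum_comm (s := (Finset.univ : Finset (Fin n)))]
      refine Finset.sum_congr rfl fun R _ => ?_
      rw [← Finset.sum_filter]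
      simp
    refine le_trans (Finset.sum_le_sum fun i _ => ?_) htot
    have ha : ∑ R : Finset (Fin n), (if ι i ∈ R then x i R else 0) ≤ 1 := by
      refine le_trans ?_ (hxc (ι i))
      refine Finset.single_le_sum (f := fun i' => ∑ R : Finset (Fin n), (if ι i ∈ R then x i' R else 0)) ?_ (Finset.mem_univ i)
      intro j _
      exact Finset.sum_nonneg fun R _ => by split_ifs <;> simp [hx0]
    have key : ∀ R : Finset (Fin n),
        3 * x i R - 2 * (if ι i ∈ R then x i R else 0) ≤ (R.card : ℝ) * x i R := by
      intro R
      by_cases hr : IsRecoverySet G i R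
      · split_ifs with h
        · have : (1:ℝ) ≤ R.card := by exact_mod_cast Finset.card_pos.mpr ⟨_, h⟩
          nlinarith [hx0 i R]
        · have : (3:ℝ) ≤ R.card := by exact_mod_cast card_of_recovery hn h3 G hsys hmds i R hr h
          nlinarith [hx0 i R]
      · simp [hxr i R hr]
    have hle : ∑ R : Finset (Fin n), (if ι i ∈ R then x i R else 0) ≤ lam i := by
      rw [← hxs i]
      exact Finset.sum_le_sum fun R _ => by split_ifs <;> simp [hx0]
    have hk := Finset.sum_le_sum (s := Finset.univ) (fun (R : Finset (Fin n)) _ => key R)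
    rw [Finset.sum_sub_distrib, ← Finset.mul_sum, ← Finset.mul_sum, hxs i] at hk
    exact max_le (by linarith) (by linarith)
  · rintro ⟨h0, hsum⟩
    let c : Fin n → ℝ := fun ν => 1 - ∑ i, (if ι i = ν then min (lam i) 1 else 0)
    have hm0 : ∀ i, 0 ≤ min (lam i) 1 := fun i => le_min (h0 i) zero_le_one
    have hc1 : ∀ ν, c ν ≤ 1 := fun ν => by
      have : 0 ≤ ∑ i, (if ι i = ν then min (lam i) 1 else 0) :=
        Finset.sum_nonneg fun i _ => by split_ifs <;> simp [h0]
      simp only [c]; linarith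
    have hc0 : ∀ ν, 0 ≤ c ν := fun ν => by
      simp only [c, sub_nonneg]
      by_cases hex : ∃ i, ι i = ν
      · obtain ⟨i, rfl⟩ := hex
        simp [hι.eq_iff]
      · push Not at hex
        simp [hex]
    have hcs : ∑ ν, c ν = n - ∑ i, min (lam i) 1 := by
      simp only [c, Finset.sum_sub_distrib]
      rw [Finset.sum_comm]
      simp
    set C := ∑ ν, c ν with hC
    have hC3 : 3 ≤ C := by
      have : ∑ i : Fin 3, min (lam i) 1 ≤ ∑ i : Fin 3, (1:ℝ) := Finset.sum_le_sum fun i _ => min_le_right _ _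
      simp at this
      rw [hcs]; linarith
    have hCD : 3 * ∑ i, max (lam i - 1) 0 ≤ C := by
      rw [hcs, le_sub_iff_add_le]
      refine le_trans (le_of_eq ?_) hsum
      rw [Finset.mul_sum, ← Finset.sum_add_distrib]
      refine Finset.sum_congr rfl fun i _ => ?_
      unfold cst
      rcases le_total (lam i) 1 with h | h
      · rw [max_eq_right (by linarith), min_eq_left h, max_eq_left (by linarith)]; ring
      · rw [max_eq_left (by linarith), min_eq_right h, max_eq_right (by linarith)]; ring
    have hCp : 0 < C := by linarith
    obtain ⟨y, hy0, hy3, hy1, hyu⟩ := hypersimplex (by omega) (fun ν => 3 * c ν / C)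
      (fun ν => div_nonneg (by linarith [hc0 ν]) hCp.le)
      (fun ν => (div_le_one hCp).2 (by linarith [hc1 ν]))
      (by rw [← Finset.sum_div, ← Finset.mul_sum, ← hC]; field_simp)
    refine ⟨fun i R => (if R = {ι i} then min (lam i) 1 else 0) + max (lam i - 1) 0 * y R,
      fun i R => ?_, fun i R hR => ?_, fun i => ?_, fun ν => ?_⟩
    · have := mul_nonneg (le_max_right (lam i - 1) 0) (hy0 R)
      have := hm0 i
      show 0 ≤ (if R = {ι i} then min (lam i) 1 else 0) + max (lam i - 1) 0 * y R
      split_ifs <;> linarith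
    · have hne : R ≠ {ι i} := by
        rintro rfl
        apply hR
        unfold IsRecoverySet
        rw [← hsys i]
        exact Submodule.subset_span ⟨ι i, by simp, rfl⟩
      show (if R = {ι i} then min (lam i) 1 else 0) + max (lam i - 1) 0 * y R = 0
      rw [if_neg hne, hy3 R (fun h => hR (recovery_of_card G hmds i R h))]; simp
    · rw [Finset.sum_add_distrib, ← Finset.mul_sum, hy1]
      simp only [Finset.sum_ite_eq', Finset.mem_univ, if_true, mul_one]
      rcases le_total (lam i) 1 with h | h
      · rw [max_eq_right (by linarith), min_eq_left h]; ring
      · rw [max_eq_left (by linarith), min_eq_right h]; ring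
    · have e : ∀ i, ∑ R : Finset (Fin n), (if ν ∈ R then
          (if R = {ι i} then min (lam i) 1 else 0) + max (lam i - 1) 0 * y R else 0)
          = (if ι i = ν then min (lam i) 1 else 0) + max (lam i - 1) 0 * (3 * c ν / C) := by
        intro i
        rw [← hyu ν, Finset.mul_sum]
        have : (if ι i = ν then min (lam i) 1 else 0) =
            ∑ R : Finset (Fin n), if R = {ι i} then (if ν ∈ R then min (lam i) 1 else 0) else 0 := by
          simp [eq_comm]
        rw [this, ← Finset.sum_add_distrib]
        refine Finset.sum_congr rfl fun R _ => ?_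
        split_ifs <;> simp
      simp only [e]
      rw [Finset.sum_add_distrib, ← Finset.sum_mul]
      have h5 : (∑ i, max (lam i - 1) 0) * (3 * c ν / C) ≤ c ν := by
        rw [mul_div_assoc', div_le_iff₀ hCp]
        nlinarith [hc0 ν]
      have h6 : c ν = 1 - ∑ i, (if ι i = ν then min (lam i) 1 else 0) := rfl
      linarith

end Aux

theorem stmt17 {F : Type} [Field F] [Fintype F] {n : ℕ} (hn : 6 ≤ n)
    (G : Matrix (Fin 3) (Fin n) F)
    (hcol : ∀ ν, matCol G ν ≠ 0)
    -- `G` is systematic: its first `3` columns form the identity matrix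
    (hsys : ∀ j : Fin 3, matCol G (Fin.castLE (by omega) j) = Pi.single j 1)
    -- `G` is MDS: every `3` columns are linearly independent
    (hmds : ∀ S : Finset (Fin n), S.card = 3 →
      LinearIndependent F (fun ν : {x : Fin n // x ∈ S} => matCol G ν.1)) :
    MeasureTheory.volume (SRRG G) =
      ENNReal.ofReal (((n : ℝ) ^ 3 + 18 * (n : ℝ) ^ 2 + 54 * (n : ℝ) - 18) / 162) := by
  rw [SRRG_eq hn (by omega) G hsys hmds, volume_reg_three n (by
    have : (6:ℝ) ≤ n := by exact_mod_cast hn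
    linarith)]
end

section
/- Let a, b be integers with 2 ≤ a < b, let q > b be a prime power, let α be a primitive element of F_q (a generator of the multiplicative group), and let G ∈ F_q^{a×b} be the Vandermonde matrix with entries G_{i,j} = α^{(i−1)(j−1)} for 1 ≤ i ≤ a, 1 ≤ j ≤ b. Then every vector (λ_1,...,λ_a) ∈ ℝ_{≥0}^a with λ_1 + ... + λ_a ≤ b/a belongs to the service rate region Λ(G). -/
open Matrix

lemma prim_pow_inj {F : Type} [Field F] [Fintype F] {b : ℕ}
    (hq : b < Fintype.card F) (α : F) (hα0 : α ≠ 0)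
    (hα : ∀ x : F, x ≠ 0 → ∃ m : ℕ, x = α ^ m) (i j : ℕ) (hij : i < j) (hj : j < b) :
    α ^ i ≠ α ^ j := by
  classical
  intro h
  have hd : α ^ (j - i) = 1 := by
    have h1 : α ^ j = α ^ i * α ^ (j - i) := by rw [← pow_add]; congr 1; omega
    rw [h1] at h
    have h0 := pow_ne_zero i hα0
    exact (mul_left_cancel₀ h0 (by rw [mul_one]; exact h)).symm
  have hsub : (Finset.univ : Finset F) ⊆
      insert 0 ((Finset.range (j - i)).image (fun m => α ^ m)) := by
    intro x _
    rw [Finset.mem_insert]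
    by_cases hx : x = 0
    · exact Or.inl hx
    · right
      obtain ⟨m, rfl⟩ := hα x hx
      rw [Finset.mem_image]
      refine ⟨m % (j - i), Finset.mem_range.2 (Nat.mod_lt _ (by omega)), ?_⟩
      conv_rhs => rw [← Nat.mod_add_div m (j - i), pow_add, pow_mul, hd, one_pow, mul_one]
  have h1 := Finset.card_le_card hsub
  have h2 := Finset.card_insert_le (0 : F) ((Finset.range (j - i)).image (fun m => α ^ m))
  have h3 := Finset.card_image_le (s := Finset.range (j - i)) (f := fun m => α ^ m)
  rw [Finset.card_range] at h3
  rw [Finset.card_univ] at h1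
  omega

lemma recovery_of_card_s18 {F : Type} [Field F] [Fintype F] {a b : ℕ}
    (hq : b < Fintype.card F)
    (α : F) (hα0 : α ≠ 0) (hα : ∀ x : F, x ≠ 0 → ∃ m : ℕ, x = α ^ m)
    (G : Matrix (Fin a) (Fin b) F)
    (hG : ∀ (i : Fin a) (j : Fin b), G i j = α ^ ((i : ℕ) * (j : ℕ)))
    (i : Fin a) (R : Finset (Fin b)) (hR : R.card = a) : IsRecoverySet G i R := by
  classical
  let e := R.orderEmbOfFin hR
  have hdet : (vandermonde (fun j : Fin a => α ^ ((e j : Fin b) : ℕ))).det ≠ 0 := by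
    rw [Matrix.det_vandermonde_ne_zero_iff]
    intro x y hxy
    by_contra hne
    have hne' : ((e x : Fin b) : ℕ) ≠ (e y : Fin b) :=
      fun h => hne (e.injective (Fin.ext h))
    rcases lt_or_gt_of_ne hne' with h | h
    · exact prim_pow_inj hq α hα0 hα _ _ h (e y).2 hxy
    · exact prim_pow_inj hq α hα0 hα _ _ h (e x).2 hxy.symm
  have hli := Matrix.linearIndependent_rows_of_det_ne_zero hdet
  have hspan := hli.span_eq_top_of_card_eq_finrank' (by simp)
  unfold IsRecoverySet
  have hle : Submodule.span F (Set.range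
      (vandermonde (fun j : Fin a => α ^ ((e j : Fin b) : ℕ))).row) ≤
      Submodule.span F (matCol G '' (R : Set (Fin b))) := by
    apply Submodule.span_mono
    rintro _ ⟨j, rfl⟩
    refine ⟨e j, R.orderEmbOfFin_mem hR j, ?_⟩
    funext r
    simp only [matCol, hG, Matrix.row, vandermonde_apply, ← pow_mul]
    rw [mul_comm]
  have hle2 := hspan.symm.le.trans hle
  exact hle2 trivial

theorem stmt18 {F : Type} [Field F] [Fintype F] {a b : ℕ}
    (ha : 2 ≤ a) (hab : a < b)
    -- `q > b`, where `q` is the size of the field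
    (hq : b < Fintype.card F)
    -- `α` is a primitive element of `F`: a generator of the multiplicative group
    (α : F) (hα0 : α ≠ 0) (hα : ∀ x : F, x ≠ 0 → ∃ m : ℕ, x = α ^ m)
    -- `G` is the Vandermonde matrix with `G_{i,j} = α^{(i-1)(j-1)}` (0-indexed here)
    (G : Matrix (Fin a) (Fin b) F)
    (hG : ∀ (i : Fin a) (j : Fin b), G i j = α ^ ((i : ℕ) * (j : ℕ)))
    (lam : Fin a → ℝ) (hpos : ∀ i, 0 ≤ lam i)
    (hsum : ∑ i, lam i ≤ (b : ℝ) / (a : ℝ)) :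
    lam ∈ SRRG G := by
  classical
  haveI : NeZero b := ⟨by omega⟩
  have hb : (0 : ℝ) < b := by exact_mod_cast (by omega : 0 < b)
  have ha' : (0 : ℝ) < a := by exact_mod_cast (by omega : 0 < a)
  obtain ⟨T, -, hT⟩ := Finset.exists_subset_card_eq
    (s := (Finset.univ : Finset (Fin b))) (n := a) (by simpa using hab.le)
  let W : Fin b → Finset (Fin b) := fun s => T.map (Equiv.addLeft s).toEmbedding
  have hW : ∀ s, (W s).card = a := fun s => by simp [W, hT]
  have hcount : ∀ ν, (Finset.univ.filter (fun s => ν ∈ W s)).card = a := by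
    intro ν
    rw [← hT]
    apply Finset.card_bij' (fun s _ => ν - s) (fun t _ => ν - t)
    · intro s hs
      simp only [W, Finset.mem_filter, Finset.mem_map] at hs
      obtain ⟨-, t, ht, h⟩ := hs
      have : ν - s = t := by rw [← h]; simp
      rwa [this]
    · intro t ht
      simp only [W, Finset.mem_filter, Finset.mem_map]
      exact ⟨Finset.mem_univ _, t, ht, by simp⟩
    · intro s _; simp
    · intro s _; simp
  refine ⟨fun i R => ∑ s, if W s = R then lam i / b else 0, ?_, ?_, ?_, ?_⟩
  · intro i R
    refine Finset.sum_nonneg fun s _ => ?_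
    have := hpos i
    split_ifs <;> positivity
  · intro i R hR
    refine Finset.sum_eq_zero fun s _ => if_neg ?_
    rintro rfl
    exact hR (recovery_of_card_s18 hq α hα0 hα G hG i _ (hW s))
  · intro i
    dsimp only
    rw [Finset.sum_comm]
    simp only [Finset.sum_ite_eq, Finset.mem_univ, if_true, Finset.sum_const, Finset.card_univ,
      Fintype.card_fin, nsmul_eq_mul]
    field_simp
  · intro ν
    have key : ∀ i, ∑ R : Finset (Fin b),
        (if ν ∈ R then (∑ s, if W s = R then lam i / b else 0) else 0) = a * (lam i / b) := by
      intro i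
      have h1 : ∀ R : Finset (Fin b),
          (if ν ∈ R then (∑ s, if W s = R then lam i / (b : ℝ) else 0) else 0) =
          ∑ s, if W s = R then (if ν ∈ R then lam i / (b : ℝ) else 0) else 0 := by
        intro R
        by_cases h : ν ∈ R <;> simp [h]
      simp only [h1]
      rw [Finset.sum_comm]
      simp only [Finset.sum_ite_eq, Finset.mem_univ, if_true]
      rw [← Finset.sum_filter, Finset.sum_const, hcount, nsmul_eq_mul]
    simp only [key]
    rw [← Finset.mul_sum, ← Finset.sum_div]
    rw [le_div_iff₀ ha'] at hsum
    rw [← mul_div_assoc, div_le_one hb]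
    linarith
end
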